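/- Let m = ⌊(q + 1 + q(q−1)/2)/2⌋ and s = ⌊(1 + q(q−1)/2)/2⌋. Then the field of SL_2(F_q)-invariant rational functions satisfies F(a0,a1,a2)^{SL_2(F_q)} = F(B/Δ^m, J/Δ^{(q+1)/2}, Γ/Δ^s), and the three generators B/Δ^m, J/Δ^{(q+1)/2}, Γ/Δ^s are algebraically independent over F; in particular F(a0,a1,a2)^{SL_2(F_q)} is a purely transcendental extension of F of transcendence degree 3. -/

import Mathlib

open MvPolynomial
open scoped Classical

/-- The algebra automorphism of `F[a0,a1,a2]` induced by the upper-triangular matrix `σ_c`: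
`a0 ↦ a0`, `a1 ↦ a1 + c·a0`, `a2 ↦ a2 + 2c·a1 + c²·a0`.  Here `a_i = X i`. -/
noncomputable def σP (F : Type*) [Field F] (c : F) :
    MvPolynomial (Fin 3) F →ₐ[F] MvPolynomial (Fin 3) F :=
  aeval ![X 0, X 1 + C c * X 0, X 2 + C (2 * c) * X 1 + C (c ^ 2) * X 0]

/-- The algebra automorphism of `F[a0,a1,a2]` induced by `τ`: `a0 ↦ a2`, `a1 ↦ -a1`, `a2 ↦ a0`. -/
noncomputable def τA (F : Type*) [Field F] :
    MvPolynomial (Fin 3) F →ₐ[F] MvPolynomial (Fin 3) F :=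
  aeval ![X 2, -X 1, X 0]

set_option linter.unnecessarySeqFocus false in
/-- `σ_c` as an algebra equivalence (its inverse is `σ_{-c}`). -/
noncomputable def σE (F : Type*) [Field F] (c : F) :
    MvPolynomial (Fin 3) F ≃ₐ[F] MvPolynomial (Fin 3) F :=
  AlgEquiv.ofAlgHom (σP F c) (σP F (-c))
    (by apply MvPolynomial.algHom_ext; intro i; fin_cases i <;>
        simp [σP, mul_neg, neg_mul, map_ofNat] <;> ring)
    (by apply MvPolynomial.algHom_ext; intro i; fin_cases i <;>
        simp [σP, mul_neg, neg_mul, map_ofNat] <;> ring)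

/-- `τ` as an algebra equivalence (it is an involution). -/
noncomputable def τE (F : Type*) [Field F] :
    MvPolynomial (Fin 3) F ≃ₐ[F] MvPolynomial (Fin 3) F :=
  AlgEquiv.ofAlgHom (τA F) (τA F)
    (by apply MvPolynomial.algHom_ext; intro i; fin_cases i <;> simp [τA])
    (by apply MvPolynomial.algHom_ext; intro i; fin_cases i <;> simp [τA])

/-- The extension of `σ_c` to the field of fractions `F(a0,a1,a2)`. -/
noncomputable def σK (F : Type*) [Field F] (c : F) :
    FractionRing (MvPolynomial (Fin 3) F) ≃+* FractionRing (MvPolynomial (Fin 3) F) :=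
  IsFractionRing.ringEquivOfRingEquiv (σE F c).toRingEquiv

/-- The extension of `τ` to the field of fractions `F(a0,a1,a2)`. -/
noncomputable def τK (F : Type*) [Field F] :
    FractionRing (MvPolynomial (Fin 3) F) ≃+* FractionRing (MvPolynomial (Fin 3) F) :=
  IsFractionRing.ringEquivOfRingEquiv (τE F).toRingEquiv

section FiniteFieldIdentities

variable {Fq K : Type*} [Field Fq] [Fintype Fq] [Field K] [Algebra Fq K]

/-- The number of nonzero squares and the number of nonsquares of a finite field of odd order. -/
theorem card_squares_and_nonsquares {d : ℕ} (hq : Fintype.card Fq = 2 * d + 1) :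
    (Finset.univ.filter (fun k : Fq => k ≠ 0 ∧ IsSquare k)).card = d ∧
    (Finset.univ.filter (fun k : Fq => k ≠ 0 ∧ ¬ IsSquare k)).card = d := by
  have h2 : ringChar Fq ≠ 2 := fun h => by
    have := FiniteField.even_card_of_char_two h
    omega
  have hsum := quadraticChar_sum_zero h2
  have hval : ∀ k : Fq, quadraticChar Fq k =
      (if k ≠ 0 ∧ IsSquare k then 1 else 0) - (if k ≠ 0 ∧ ¬ IsSquare k then 1 else 0) := by
    intro k
    by_cases h0 : k = 0
    · simp [h0]
    by_cases hs : IsSquare k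
    · simp [h0, hs, (quadraticChar_one_iff_isSquare h0).2 hs]
    · simp [h0, hs, quadraticChar_neg_one_iff_not_isSquare.2 hs]
  simp only [hval, Finset.sum_sub_distrib, Finset.sum_boole] at hsum
  have htot : (Finset.univ.filter (fun k : Fq => k ≠ 0 ∧ IsSquare k)).card +
      (Finset.univ.filter (fun k : Fq => k ≠ 0 ∧ ¬ IsSquare k)).card = 2 * d := by
    rw [← Finset.card_union_of_disjoint]
    · have : (Finset.univ.filter (fun k : Fq => k ≠ 0 ∧ IsSquare k)) ∪
          (Finset.univ.filter (fun k : Fq => k ≠ 0 ∧ ¬ IsSquare k)) = Finset.univ.erase 0 := by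
        ext k
        simp only [Finset.mem_union, Finset.mem_filter, Finset.mem_erase, Finset.mem_univ]
        tauto
      rw [this, Finset.card_erase_of_mem (Finset.mem_univ _), Finset.card_univ, hq]
      omega
    · rw [Finset.disjoint_left]
      intro k
      simp only [Finset.mem_filter]
      tauto
  have heq := Int.ofNat.inj (sub_eq_zero.1 hsum)
  omega

theorem prod_add_mul (y u : K) :
    ∏ c : Fq, (y + algebraMap Fq K c * u) =
      y ^ Fintype.card Fq - y * u ^ (Fintype.card Fq - 1) := by
  have hq : 1 ≤ Fintype.card Fq := Fintype.card_pos
  by_cases hu : u = 0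
  · have : Fintype.card Fq - 1 ≠ 0 := by have := Fintype.one_lt_card (α := Fq); omega
    simp [hu, this]
  have hX : (Polynomial.X ^ Fintype.card Fq - Polynomial.X : Polynomial Fq) =
      ∏ c : Fq, (Polynomial.X - Polynomial.C c) := by
    have hm : (Polynomial.X ^ Fintype.card Fq - Polynomial.X : Polynomial Fq).Monic :=
      Polynomial.monic_X_pow_sub (by simpa using Fintype.one_lt_card (α := Fq))
    have := Polynomial.prod_multiset_X_sub_C_of_monic_of_roots_card_eq hm (by
      rw [FiniteField.roots_X_pow_card_sub_X, FiniteField.X_pow_card_sub_X_natDegree_eq _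
        Fintype.one_lt_card]; simp)
    rw [← this, FiniteField.roots_X_pow_card_sub_X]
    rfl
  have h := congrArg (Polynomial.aeval (-(y / u))) hX
  simp only [map_sub, map_pow, Polynomial.aeval_X, map_prod, Polynomial.aeval_C] at h
  have h' : ∏ c : Fq, (y + algebraMap Fq K c * u) =
      ∏ c : Fq, ((-u) * (-(y / u) - algebraMap Fq K c)) :=
    Finset.prod_congr rfl fun c _ => by field_simp; ring
  rw [h', Finset.prod_mul_distrib, ← h, Finset.prod_const, Finset.card_univ]
  obtain ⟨r, hr⟩ : ∃ r, Fintype.card Fq = r + 1 := ⟨_, (Nat.sub_add_cancel hq).symm⟩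
  rw [hr, mul_sub, ← mul_pow, Nat.add_sub_cancel]
  have e1 : -u * -(y / u) = y := by field_simp
  have e2 : (-u) ^ (r + 1) = - u ^ (r + 1) := by
    have h1 : (-1 : Fq) ^ Fintype.card Fq = -1 := FiniteField.pow_card _
    have h2 := congrArg (algebraMap Fq K) h1
    simp only [map_pow, map_neg, map_one, hr] at h2
    rw [neg_pow, h2, neg_one_mul]
  rw [e1, e2, pow_succ u]
  field_simp

theorem add_pow_card (a b : K) :
    (a + b) ^ Fintype.card Fq = a ^ Fintype.card Fq + b ^ Fintype.card Fq :=
  map_add (FiniteField.frobeniusAlgHom Fq K) a b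

theorem prod_sq_sub {d : ℕ} (hq : Fintype.card Fq = 2 * d + 1) (y u D : K) :
    ∏ c : Fq, ((y + algebraMap Fq K c * u) ^ 2 - D) =
      (∏ c : Fq, (y + algebraMap Fq K c * u)) ^ 2 - D * (D ^ d - u ^ (2 * d)) ^ 2 := by
  obtain ⟨δ, hδ⟩ := IsAlgClosed.exists_pow_nat_eq (algebraMap K (AlgebraicClosure K) D)
    (n := 2) (by norm_num)
  apply (algebraMap K (AlgebraicClosure K)).injective
  simp only [map_sub, map_prod, map_pow, map_add, map_mul, ← hδ,
    ← IsScalarTower.algebraMap_apply Fq K (AlgebraicClosure K)]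
  set Y := algebraMap K (AlgebraicClosure K) y
  set U := algebraMap K (AlgebraicClosure K) u
  have h1 : ∏ c : Fq, ((Y + algebraMap Fq (AlgebraicClosure K) c * U) ^ 2 - δ ^ 2) =
      (∏ c : Fq, ((Y + δ) + algebraMap Fq (AlgebraicClosure K) c * U)) *
      ∏ c : Fq, ((Y + -δ) + algebraMap Fq (AlgebraicClosure K) c * U) := by
    rw [← Finset.prod_mul_distrib]
    exact Finset.prod_congr rfl fun c _ => by ring
  rw [h1, prod_add_mul, prod_add_mul, prod_add_mul, add_pow_card, add_pow_card, hq,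
    Nat.add_sub_cancel, (show Odd (2 * d + 1) from ⟨d, rfl⟩).neg_pow]
  ring

/-- The product `γ_k` evaluated at a point. -/
noncomputable def gammaAt (Fq : Type*) {K : Type*} [Field Fq] [Fintype Fq] [Field K] [Algebra Fq K]
    (a₀ a₁ a₂ : K) (k : Fq) : K :=
  ∏ c : Fq, (a₂ + 2 * algebraMap Fq K c * a₁ + (algebraMap Fq K c ^ 2 - algebraMap Fq K k) * a₀)

theorem pow_mul_gammaAt {d : ℕ} (hq : Fintype.card Fq = 2 * d + 1) (a₀ a₁ a₂ : K) (k : Fq) :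
    a₀ ^ (2 * d + 1) * gammaAt Fq a₀ a₁ a₂ k =
      (∏ c : Fq, (a₁ + algebraMap Fq K c * a₀)) ^ 2 -
        (a₁ ^ 2 - a₀ * a₂ + algebraMap Fq K k * a₀ ^ 2) *
        ((a₁ ^ 2 - a₀ * a₂ + algebraMap Fq K k * a₀ ^ 2) ^ d - a₀ ^ (2 * d)) ^ 2 := by
  rw [← prod_sq_sub hq, gammaAt, ← hq, ← Finset.card_univ, ← Finset.prod_const,
    ← Finset.prod_mul_distrib]
  exact Finset.prod_congr rfl fun c _ => by ring

theorem beta_sq {d : ℕ} (hq : Fintype.card Fq = 2 * d + 1) (a₀ a₁ a₂ : K) :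
    (∏ c : Fq, (a₁ + algebraMap Fq K c * a₀)) ^ 2 =
      a₀ * gammaAt Fq a₀ a₁ a₂ 0 * a₀ ^ (2 * d) +
        (a₁ ^ 2 - a₀ * a₂) * ((a₁ ^ 2 - a₀ * a₂) ^ d - a₀ ^ (2 * d)) ^ 2 := by
  have h := pow_mul_gammaAt hq a₀ a₁ a₂ 0
  simp only [map_zero, zero_mul, add_zero] at h
  linear_combination -h

theorem mul_gammaAt {d : ℕ} (hq : Fintype.card Fq = 2 * d + 1) (a₀ a₁ a₂ : K) (h0 : a₀ ≠ 0)
    (k : Fq) :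
    a₀ * gammaAt Fq a₀ a₁ a₂ k = a₀ * gammaAt Fq a₀ a₁ a₂ 0 -
        2 * algebraMap Fq K k * (a₀ ^ 2) ^ (d + 1) +
        2 * (a₁ ^ 2 - a₀ * a₂ + algebraMap Fq K k * a₀ ^ 2) ^ (d + 1) -
        2 * (a₁ ^ 2 - a₀ * a₂) ^ (d + 1) := by
  have h := pow_mul_gammaAt hq a₀ a₁ a₂ k
  rw [beta_sq hq a₀ a₁ a₂] at h
  have hF : (a₁ ^ 2 - a₀ * a₂ + algebraMap Fq K k * a₀ ^ 2) ^ (2 * d + 1) =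
      (a₁ ^ 2 - a₀ * a₂) ^ (2 * d + 1) + algebraMap Fq K k * (a₀ ^ 2) ^ (2 * d + 1) := by
    rw [← hq, add_pow_card, mul_pow, ← map_pow, FiniteField.pow_card]
  generalize a₁ ^ 2 - a₀ * a₂ = Δ at *
  obtain ⟨D, hD⟩ : ∃ D, D = Δ + algebraMap Fq K k * a₀ ^ 2 := ⟨_, rfl⟩
  rw [← hD] at h hF ⊢
  apply mul_left_cancel₀ (pow_ne_zero (2 * d) h0)
  linear_combination h - hF - a₀ ^ (4 * d) * hD

end FiniteFieldIdentities

section DegreeBound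

/-- The polynomial in `t = a₀² / Δ` whose value at `t` is `a₀ γ_κ / Δ ^ (d + 1)`, where
`g = J / Δ ^ (d + 1)` and `q = 2 d + 1`. -/
noncomputable def normalizedGamma {R : Type*} [CommRing R] (d : ℕ) (g κ : R) : Polynomial R :=
  Polynomial.C g - Polynomial.C (2 * κ) * Polynomial.X ^ (d + 1) +
    Polynomial.C 2 * (Polynomial.C κ * Polynomial.X + Polynomial.C 1) ^ (d + 1) - Polynomial.C 2

theorem natDegree_normalizedGamma_le {R : Type*} [CommRing R] (d : ℕ) (g κ : R) :
    (normalizedGamma d g κ).natDegree ≤ d + 1 := by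
  have h1 : ((Polynomial.C κ * Polynomial.X + Polynomial.C 1) ^ (d + 1)).natDegree ≤ d + 1 := by
    simpa using Polynomial.natDegree_pow_le_of_le (d + 1)
      (Polynomial.natDegree_linear_le (a := κ) (b := 1))
  unfold normalizedGamma
  refine (Polynomial.natDegree_sub_le_of_le (Polynomial.natDegree_add_le_of_degree_le
    (Polynomial.natDegree_sub_le_of_le (Polynomial.natDegree_C _).le
      (Polynomial.natDegree_C_mul_X_pow_le _ _))
    ((Polynomial.natDegree_C_mul_le _ _).trans h1)) (Polynomial.natDegree_C _).le).trans ?_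
  simp

theorem natDegree_normalizedGamma_le_of_pow_eq_one {R : Type*} [CommRing R] (d : ℕ) (g κ : R)
    (hκ : κ ^ d = 1) : (normalizedGamma d g κ).natDegree ≤ d := by
  refine Polynomial.natDegree_le_pred (natDegree_normalizedGamma_le d g κ) ?_
  have h1 : ((Polynomial.C κ * Polynomial.X + Polynomial.C 1) ^ (d + 1)).coeff (d + 1) =
      κ ^ (d + 1) := by
    simpa [-map_one, Polynomial.coeff_C] using Polynomial.coeff_pow_of_natDegree_le (m := d + 1)
      (Polynomial.natDegree_linear_le (a := κ) (b := 1))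
  unfold normalizedGamma
  rw [Polynomial.coeff_sub, Polynomial.coeff_add, Polynomial.coeff_sub, Polynomial.coeff_C_mul,
    Polynomial.coeff_C_mul, h1, pow_succ κ, hκ]
  simp

theorem eval_zero_normalizedGamma {R : Type*} [CommRing R] (d : ℕ) (g κ : R) :
    (normalizedGamma d g κ).eval 0 = g := by
  simp [normalizedGamma]

variable {F K : Type*} [Field F] [Field K] [Algebra F K]

theorem finrank_le_mul_finrank_adjoin {M : Type*} [Field M] [Algebra M K] (x : K)
    (p : Polynomial M) (hp : p ≠ 0) (hx : Polynomial.aeval x p = 0)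
    (h : FiniteDimensional (IntermediateField.adjoin M {x}) K) :
    FiniteDimensional M K ∧
      Module.finrank M K ≤ p.natDegree * Module.finrank (IntermediateField.adjoin M {x}) K := by
  have hintegral : IsIntegral M x := isAlgebraic_iff_isIntegral.1 ⟨p, hp, hx⟩
  have h3 : FiniteDimensional M (IntermediateField.adjoin M {x}) :=
    IntermediateField.adjoin.finiteDimensional hintegral
  refine ⟨FiniteDimensional.trans M (IntermediateField.adjoin M {x}) K, ?_⟩
  rw [← Module.finrank_mul_finrank M (IntermediateField.adjoin M {x}) K,
    IntermediateField.adjoin.finrank hintegral]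
  exact Nat.mul_le_mul_right _
    (Polynomial.natDegree_le_natDegree (minpoly.degree_le_of_ne_zero M x hp hx))

theorem finrank_le_mul_of_root (E : IntermediateField F K) (x : K) (p : Polynomial E)
    (hp : p ≠ 0) (hx : Polynomial.aeval x p = 0) {d e : ℕ} (hd : p.natDegree ≤ d)
    (h : ∀ E' : IntermediateField F K, E ≤ E' → x ∈ E' →
      FiniteDimensional E' K ∧ Module.finrank E' K ≤ e) :
    FiniteDimensional E K ∧ Module.finrank E K ≤ d * e := by
  obtain ⟨h1, h2⟩ := h ((IntermediateField.adjoin E {x}).restrictScalars F)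
    (fun y hy => (IntermediateField.adjoin E {x}).algebraMap_mem ⟨y, hy⟩)
    (IntermediateField.mem_adjoin_simple_self E x)
  obtain ⟨h3, h4⟩ := finrank_le_mul_finrank_adjoin x p hp hx h1
  exact ⟨h3, h4.trans (Nat.mul_le_mul hd h2)⟩

theorem finrank_le_of_mem {E : IntermediateField F K} {S : Set K}
    (hgen : IntermediateField.adjoin F S = ⊤) (hS : S ⊆ E) :
    FiniteDimensional E K ∧ Module.finrank E K ≤ 1 := by
  have hE : E = ⊤ := top_le_iff.1 (hgen ▸ IntermediateField.adjoin_le_iff.2 hS)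
  subst hE
  have h := IntermediateField.finrank_top (F := F) (E := K)
  exact ⟨Module.finite_of_finrank_pos (by omega), h.le⟩

variable {Fq : Type*} [Field Fq] [Fintype Fq] [Algebra Fq K]

/-- Over a field containing `a₀`, `β` and `Δ`, the element `a₁` is a root of a polynomial of
degree `q`. -/
theorem finrank_le_card_of_mem {a₀ a₁ a₂ : K} (h0 : a₀ ≠ 0)
    (hgen : IntermediateField.adjoin F {a₀, a₁, a₂} = ⊤) (E : IntermediateField F K)
    (ha₀ : a₀ ∈ E) (hΔ : a₁ ^ 2 - a₀ * a₂ ∈ E)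
    (hβ : ∏ c : Fq, (a₁ + algebraMap Fq K c * a₀) ∈ E) :
    FiniteDimensional E K ∧ Module.finrank E K ≤ Fintype.card Fq := by
  have hq := Fintype.one_lt_card (α := Fq)
  let u : E := ⟨a₀, ha₀⟩
  let b : E := ⟨_, hβ⟩
  have hdeg : (Polynomial.C (u ^ (Fintype.card Fq - 1)) * Polynomial.X +
      Polynomial.C b).degree < (Fintype.card Fq : WithBot ℕ) :=
    lt_of_le_of_lt Polynomial.degree_linear_le (by exact_mod_cast hq)
  have := finrank_le_mul_of_root (e := 1) (d := Fintype.card Fq) E a₁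
    (Polynomial.X ^ Fintype.card Fq - (Polynomial.C (u ^ (Fintype.card Fq - 1)) *
      Polynomial.X + Polynomial.C b))
    (Polynomial.monic_X_pow_sub hdeg).ne_zero ?_ ?_ ?_
  · simpa using this
  · simp [u, b, prod_add_mul]
    ring
  · rw [Polynomial.natDegree_sub_eq_left_of_natDegree_lt] <;> rw [Polynomial.natDegree_X_pow]
    exact lt_of_le_of_lt Polynomial.natDegree_linear_le hq
  · intro E' hE ha₁
    refine finrank_le_of_mem hgen ?_
    rintro x (rfl | rfl | rfl)
    · exact hE ha₀
    · exact ha₁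
    · have : x = (a₁ ^ 2 - (a₁ ^ 2 - a₀ * x)) / a₀ := by field_simp; ring
      rw [this]
      exact E'.div_mem (E'.sub_mem (pow_mem ha₁ 2) (hE hΔ)) (hE ha₀)

theorem aeval_normalizedGamma {d : ℕ} (hq : Fintype.card Fq = 2 * d + 1) (a₀ a₁ a₂ : K)
    (h0 : a₀ ≠ 0) (hΔ : a₁ ^ 2 - a₀ * a₂ ≠ 0) (k : Fq) (E : IntermediateField F K) (g κ : E)
    (hg : a₀ * gammaAt Fq a₀ a₁ a₂ 0 = g * (a₁ ^ 2 - a₀ * a₂) ^ (d + 1))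
    (hκ : (κ : K) = algebraMap Fq K k) :
    a₀ * gammaAt Fq a₀ a₁ a₂ k = (a₁ ^ 2 - a₀ * a₂) ^ (d + 1) *
      Polynomial.aeval (a₀ ^ 2 / (a₁ ^ 2 - a₀ * a₂)) (normalizedGamma d g κ) := by
  rw [mul_gammaAt hq a₀ a₁ a₂ h0 k, hg, ← hκ]
  generalize a₁ ^ 2 - a₀ * a₂ = Δ at *
  have h1 : Δ + (κ : K) * a₀ ^ 2 = Δ * ((κ : K) * (a₀ ^ 2 / Δ) + 1) := by field_simp; ring
  rw [h1, mul_pow]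
  simp only [normalizedGamma, map_sub, map_add, map_mul, map_pow, Polynomial.aeval_C,
    Polynomial.aeval_X, map_ofNat, map_one, IntermediateField.algebraMap_apply, div_pow]
  field_simp

/-- The part of the degree bound that follows from the numerical relations between
`u = a₀`, `Δ`, `β`, the generators and the values `P`, `R` of the normalized products over
nonsquares and squares at `t = u² / Δ`. -/
theorem finrank_le_of_relations (E : IntermediateField F K) {d m s N : ℕ} (hd : d ≠ 0)
    (hm : m = (2 * d + 1 + 1 + (2 * d + 1) * d) / 2) (hs : s = (1 + (2 * d + 1) * d) / 2)
    {u Δ β g₁ g₂ g₃ : K} (hu : u ≠ 0) (hΔ : Δ ≠ 0)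
    (hg₁ : g₁ ∈ E) (hg₂ : g₂ ∈ E) (hg₃ : g₃ ∈ E) (h₁ : g₁ ≠ 0) (h₃ : g₃ ≠ 0)
    (hβ : β ^ 2 = g₂ * Δ ^ (d + 1) * u ^ (2 * d) + Δ * (Δ ^ d - u ^ (2 * d)) ^ 2)
    (P R : Polynomial E) (hPdeg : P.natDegree ≤ d * (d + 1)) (hRdeg : R.natDegree ≤ d * d)
    (hP0 : P.eval 0 ≠ 0) (hR0 : R.eval 0 ≠ 0)
    (hP : u ^ d * (g₃ * Δ ^ s) = Δ ^ (d * (d + 1)) * Polynomial.aeval (u ^ 2 / Δ) P)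
    (hR : u ^ d * (g₁ * Δ ^ m) = β * Δ ^ (d * (d + 1)) * Polynomial.aeval (u ^ 2 / Δ) R)
    (h : ∀ E' : IntermediateField F K, u ∈ E' → Δ ∈ E' → β ∈ E' →
      FiniteDimensional E' K ∧ Module.finrank E' K ≤ N) :
    FiniteDimensional E K ∧ Module.finrank E K ≤ d * (2 * d + 2) * N := by
  obtain ⟨t, ht⟩ : ∃ t, t = u ^ 2 / Δ := ⟨_, rfl⟩
  have hut : u ^ 2 = t * Δ := by rw [ht]; field_simp
  have ht0 : t ≠ 0 := by rw [ht]; positivity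
  rw [← ht] at hP hR
  have hmem : ∀ (Q : Polynomial E) (E' : IntermediateField F K), E ≤ E' → t ∈ E' →
      Polynomial.aeval t Q ∈ E' := by
    intro Q E' hE htE
    rw [Polynomial.aeval_eq_sum_range]
    exact sum_mem fun i _ => mul_mem (hE (Q.coeff i).2) (pow_mem htE i)
  have hu2d : u ^ (2 * d) = t ^ d * Δ ^ d := by rw [pow_mul, hut, mul_pow]
  have hβ' : β ^ 2 = Δ ^ (2 * d + 1) * (g₂ * t ^ d + (1 - t ^ d) ^ 2) := by
    rw [hβ, hu2d]; ring
  obtain ⟨e, rfl | rfl⟩ := Nat.even_or_odd' d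
  · have hs' : s = e * (4 * e + 1) := by
      rw [hs, show 1 + (2 * (2 * e) + 1) * (2 * e) = 1 + 2 * (e * (4 * e + 1)) by ring]; omega
    have hm' : m = 2 * e + 1 + e * (4 * e + 1) := by
      rw [hm, show 2 * (2 * e) + 1 + 1 + (2 * (2 * e) + 1) * (2 * e) =
        2 * (2 * e + 1 + e * (4 * e + 1)) by ring]; omega
    subst hs' hm'
    have hud : u ^ (2 * e) = t ^ e * Δ ^ e := by rw [pow_mul, hut, mul_pow]
    rw [hud] at hP hR
    have hP' : t ^ e * g₃ = Polynomial.aeval t P := by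
      apply mul_left_cancel₀ (pow_ne_zero (2 * e * (2 * e + 1)) hΔ)
      linear_combination hP
    have hR' : t ^ e * g₁ * Δ ^ (2 * e + 1) = β * Polynomial.aeval t R := by
      apply mul_left_cancel₀ (pow_ne_zero (2 * e * (2 * e + 1)) hΔ)
      linear_combination hR
    have hΔ' : Δ = (g₂ * t ^ (2 * e) + (1 - t ^ (2 * e)) ^ 2) * Polynomial.aeval t R ^ 2 /
        (t ^ e * g₁) ^ 2 := by
      rw [eq_div_iff (by positivity)]
      apply mul_left_cancel₀ (pow_ne_zero (2 * (2 * e) + 1) hΔ)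
      linear_combination (t ^ e * g₁ * Δ ^ (2 * e + 1) + β * Polynomial.aeval t R) * hR' +
        Polynomial.aeval t R ^ 2 * hβ'
    have hRne : Polynomial.aeval t R ≠ 0 := fun h0 => by
      rw [h0, mul_zero] at hR'
      exact (by positivity : t ^ e * g₁ * Δ ^ (2 * e + 1) ≠ 0) hR'
    have key := finrank_le_mul_of_root (d := 2 * e * (2 * e + 1)) (e := 2 * N) E t
      (P - Polynomial.C ⟨g₃, hg₃⟩ * Polynomial.X ^ e) ?_ ?_ ?_ ?_
    · refine ⟨key.1, key.2.trans (le_of_eq (by ring))⟩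
    · intro h0
      apply hP0
      have := congrArg (Polynomial.eval 0) h0
      simpa [show e ≠ 0 by omega] using this
    · rw [map_sub, ← hP', map_mul, Polynomial.aeval_C, map_pow, Polynomial.aeval_X]
      exact sub_eq_zero.2 (mul_comm _ _)
    · refine (Polynomial.natDegree_sub_le_of_le hPdeg
        (Polynomial.natDegree_C_mul_X_pow_le _ _)).trans (max_le le_rfl ?_)
      nlinarith
    · intro E' hE htE
      have hΔE : Δ ∈ E' := by
        rw [hΔ']
        have := hmem R E' hE htE
        have hp : t ^ (2 * e) ∈ E' := pow_mem htE _
        exact E'.div_mem (mul_mem (add_mem (mul_mem (hE hg₂) hp)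
          (pow_mem (sub_mem (one_mem _) hp) 2)) (pow_mem this 2))
          (pow_mem (mul_mem (pow_mem htE _) (hE hg₁)) 2)
      refine finrank_le_mul_of_root E' u
        (Polynomial.X ^ 2 - Polynomial.C (⟨t, htE⟩ * ⟨Δ, hΔE⟩)) ?_ ?_ ?_ ?_
      · exact (Polynomial.monic_X_pow_sub_C _ two_ne_zero).ne_zero
      · simp [hut]
      · rw [Polynomial.natDegree_X_pow_sub_C]
      · intro E'' hE' hu'
        refine h E'' hu' (hE' hΔE) ?_
        rw [(eq_div_iff hRne).2 hR'.symm]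
        exact E''.div_mem (mul_mem (mul_mem (pow_mem (hE' htE) _) (hE' (hE hg₁)))
          (pow_mem (hE' hΔE) _)) (hE' (hmem R E' hE htE))
  · have hs' : s = 4 * e ^ 2 + 5 * e + 2 := by
      rw [hs, show 1 + (2 * (2 * e + 1) + 1) * (2 * e + 1) = 2 * (4 * e ^ 2 + 5 * e + 2) by ring]
      omega
    have hm' : m = 4 * e ^ 2 + 7 * e + 3 := by
      rw [hm, show 2 * (2 * e + 1) + 1 + 1 + (2 * (2 * e + 1) + 1) * (2 * e + 1) =
        1 + 2 * (4 * e ^ 2 + 7 * e + 3) by ring]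
      omega
    subst hs' hm'
    have hud : u ^ (2 * e + 1) = u * (t ^ e * Δ ^ e) := by
      rw [pow_succ, pow_mul, hut, mul_pow, mul_comm]
    rw [hud] at hP hR
    have hP' : u * (t ^ e * g₃) = Polynomial.aeval t P := by
      apply mul_left_cancel₀ (pow_ne_zero ((2 * e + 1) * (2 * e + 1 + 1)) hΔ)
      linear_combination hP
    have hR' : u * t ^ e * g₁ * Δ ^ (2 * e + 1) = β * Polynomial.aeval t R := by
      apply mul_left_cancel₀ (pow_ne_zero ((2 * e + 1) * (2 * e + 1 + 1)) hΔ)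
      linear_combination hR
    have hroot : (g₂ * t ^ (2 * e + 1) + (1 - t ^ (2 * e + 1)) ^ 2) * Polynomial.aeval t R ^ 2 =
        g₁ ^ 2 * t ^ (2 * e + 1) := by
      apply mul_left_cancel₀ (pow_ne_zero (2 * (2 * e + 1) + 1) hΔ)
      linear_combination -(u * t ^ e * g₁ * Δ ^ (2 * e + 1) + β * Polynomial.aeval t R) * hR' -
        Polynomial.aeval t R ^ 2 * hβ' + t ^ (2 * e) * g₁ ^ 2 * Δ ^ (4 * e + 2) * hut
    have hRne : Polynomial.aeval t R ≠ 0 := fun h0 => by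
      rw [h0, mul_zero] at hR'
      exact (by positivity : u * t ^ e * g₁ * Δ ^ (2 * e + 1) ≠ 0) hR'
    let c₁ : E := ⟨g₁, hg₁⟩
    let c₂ : E := ⟨g₂, hg₂⟩
    refine finrank_le_mul_of_root E t ((Polynomial.C c₂ * Polynomial.X ^ (2 * e + 1) +
      (Polynomial.C 1 - Polynomial.X ^ (2 * e + 1)) ^ 2) * R ^ 2 -
      Polynomial.C (c₁ ^ 2) * Polynomial.X ^ (2 * e + 1)) ?_ ?_ ?_ ?_
    · intro h0
      apply hR0
      have := congrArg (Polynomial.eval 0) h0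
      simpa using this
    · simp only [map_sub, map_mul, map_add, map_pow, Polynomial.aeval_C, Polynomial.aeval_X,
        map_one]
      exact sub_eq_zero.2 hroot
    · have hX : (Polynomial.C 1 - Polynomial.X ^ (2 * e + 1) : Polynomial E).natDegree ≤
          2 * e + 1 :=
        (Polynomial.natDegree_sub_le_of_le (Polynomial.natDegree_C _).le
          (Polynomial.natDegree_X_pow_le _)).trans (by simp)
      have hf : (Polynomial.C c₂ * Polynomial.X ^ (2 * e + 1) +
          (Polynomial.C 1 - Polynomial.X ^ (2 * e + 1)) ^ 2).natDegree ≤ 2 * (2 * e + 1) :=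
        (Polynomial.natDegree_add_le_of_degree_le
          ((Polynomial.natDegree_C_mul_X_pow_le _ _).trans (by omega))
          (Polynomial.natDegree_pow_le_of_le 2 hX))
      refine (Polynomial.natDegree_sub_le_of_le (Polynomial.natDegree_mul_le_of_le hf
        (Polynomial.natDegree_pow_le_of_le 2 hRdeg))
        (Polynomial.natDegree_C_mul_X_pow_le _ _)).trans (max_le (le_of_eq (by ring)) ?_)
      nlinarith
    · intro E' hE htE
      have huE : u ∈ E' := by
        rw [(eq_div_iff (by positivity)).2 hP']
        exact E'.div_mem (hmem P E' hE htE) (mul_mem (pow_mem htE _) (hE hg₃))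
      have hΔE : Δ ∈ E' := by
        rw [(eq_div_iff ht0).2 ((mul_comm Δ t).trans hut.symm)]
        exact E'.div_mem (pow_mem huE 2) htE
      refine h E' huE hΔE ?_
      rw [(eq_div_iff hRne).2 hR'.symm]
      exact E'.div_mem (mul_mem (mul_mem (mul_mem huE (pow_mem htE _)) (hE hg₁))
        (pow_mem hΔE _)) (hmem R E' hE htE)

/-- A field containing the three generators has index at most `|PSL₂(F_q)|`. -/
theorem finrank_le_of_generators [Algebra Fq F] [IsScalarTower Fq F K] {d : ℕ}
    (hq : Fintype.card Fq = 2 * d + 1) {a₀ a₁ a₂ : K} (h0 : a₀ ≠ 0)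
    (hΔ : a₁ ^ 2 - a₀ * a₂ ≠ 0) (hβ : ∏ c : Fq, (a₁ + algebraMap Fq K c * a₀) ≠ 0)
    (hγ : ∀ k : Fq, gammaAt Fq a₀ a₁ a₂ k ≠ 0)
    (hgen : IntermediateField.adjoin F {a₀, a₁, a₂} = ⊤) (E : IntermediateField F K) {m s : ℕ}
    (hm : m = (2 * d + 1 + 1 + (2 * d + 1) * d) / 2) (hs : s = (1 + (2 * d + 1) * d) / 2)
    {g₁ g₂ g₃ : K} (hg₁ : g₁ ∈ E) (hg₂ : g₂ ∈ E) (hg₃ : g₃ ∈ E)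
    (hB : (∏ c : Fq, (a₁ + algebraMap Fq K c * a₀)) *
      ∏ k ∈ Finset.univ.filter (fun k : Fq => k ≠ 0 ∧ IsSquare k), gammaAt Fq a₀ a₁ a₂ k =
      g₁ * (a₁ ^ 2 - a₀ * a₂) ^ m)
    (hJ : a₀ * gammaAt Fq a₀ a₁ a₂ 0 = g₂ * (a₁ ^ 2 - a₀ * a₂) ^ (d + 1))
    (hΓ : ∏ k ∈ Finset.univ.filter (fun k : Fq => k ≠ 0 ∧ ¬ IsSquare k), gammaAt Fq a₀ a₁ a₂ k =
      g₃ * (a₁ ^ 2 - a₀ * a₂) ^ s) :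
    FiniteDimensional E K ∧ Module.finrank E K ≤ d * (2 * d + 2) * (2 * d + 1) := by
  have hd : d ≠ 0 := by
    have := Fintype.one_lt_card (α := Fq)
    omega
  have h2 : ringChar Fq ≠ 2 := fun h => by
    have := FiniteField.even_card_of_char_two h
    omega
  obtain ⟨hcR, hcN⟩ := card_squares_and_nonsquares hq
  have hg₂0 : g₂ ≠ 0 := fun h => by
    rw [h, zero_mul] at hJ
    exact mul_ne_zero h0 (hγ 0) hJ
  have hg₁0 : g₁ ≠ 0 := fun h => by
    rw [h, zero_mul] at hB
    exact mul_ne_zero hβ (Finset.prod_ne_zero_iff.2 fun k _ => hγ k) hB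
  have hg₃0 : g₃ ≠ 0 := fun h => by
    rw [h, zero_mul] at hΓ
    exact (Finset.prod_ne_zero_iff.2 fun k _ => hγ k) hΓ
  let κ : Fq → E := fun k => algebraMap F E (algebraMap Fq F k)
  have hκ : ∀ k, (κ k : K) = algebraMap Fq K k := fun k =>
    (IsScalarTower.algebraMap_apply Fq F K k).symm
  let c₂ : E := ⟨g₂, hg₂⟩
  have hc₂ : c₂ ≠ 0 := fun h => hg₂0 (congrArg Subtype.val h)
  have hprod : ∀ S : Finset Fq, S.card = d →
      a₀ ^ d * ∏ k ∈ S, gammaAt Fq a₀ a₁ a₂ k = (a₁ ^ 2 - a₀ * a₂) ^ (d * (d + 1)) *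
        Polynomial.aeval (a₀ ^ 2 / (a₁ ^ 2 - a₀ * a₂)) (∏ k ∈ S, normalizedGamma d c₂ (κ k)) := by
    intro S hS
    rw [map_prod, mul_comm d, pow_mul, ← hS, ← Finset.prod_const, ← Finset.prod_const,
      ← Finset.prod_mul_distrib, ← Finset.prod_mul_distrib, hS]
    exact Finset.prod_congr rfl fun k _ => aeval_normalizedGamma hq a₀ a₁ a₂ h0 hΔ k E c₂ (κ k)
      hJ (hκ k)
  have heval : ∀ S : Finset Fq, (∏ k ∈ S, normalizedGamma d c₂ (κ k)).eval 0 ≠ 0 := by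
    intro S
    rw [Polynomial.eval_prod, Finset.prod_ne_zero_iff]
    intro k _
    rwa [eval_zero_normalizedGamma]
  refine finrank_le_of_relations E hd hm hs h0 hΔ hg₁ hg₂ hg₃ hg₁0 hg₃0
    (β := ∏ c : Fq, (a₁ + algebraMap Fq K c * a₀))
    (by rw [beta_sq hq a₀ a₁ a₂, hJ])
    (∏ k ∈ Finset.univ.filter (fun k : Fq => k ≠ 0 ∧ ¬ IsSquare k), normalizedGamma d c₂ (κ k))
    (∏ k ∈ Finset.univ.filter (fun k : Fq => k ≠ 0 ∧ IsSquare k), normalizedGamma d c₂ (κ k))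
    ?_ ?_ (heval _) (heval _) ?_ ?_ ?_
  · refine (Polynomial.natDegree_prod_le _ _).trans ((Finset.sum_le_card_nsmul _ _ _
      fun k _ => natDegree_normalizedGamma_le d c₂ (κ k)).trans ?_)
    rw [hcN, smul_eq_mul]
  · refine (Polynomial.natDegree_prod_le _ _).trans ((Finset.sum_le_card_nsmul _ _ d
      fun k hk => natDegree_normalizedGamma_le_of_pow_eq_one d c₂ (κ k) ?_).trans ?_)
    · obtain ⟨-, hk0, hk⟩ := Finset.mem_filter.1 hk
      rw [FiniteField.isSquare_iff h2 hk0, hq, show (2 * d + 1) / 2 = d by omega] at hk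
      simp only [κ, ← map_pow, hk, map_one]
    · rw [hcR, smul_eq_mul]
  · rw [← hΓ, hprod _ hcN]
  · rw [← hB, mul_left_comm, hprod _ hcR, mul_assoc]
  · intro E' hu hΔ' hβ'
    rw [← hq]
    exact finrank_le_card_of_mem h0 hgen E' hu hΔ' hβ'

end DegreeBound

section Invariance

variable {F : Type*} [Field F]

theorem σP_X_zero (c : F) : σP F c (X 0) = X 0 := by simp [σP]

theorem σP_X_one (c : F) : σP F c (X 1) = X 1 + C c * X 0 := by simp [σP]

theorem σP_X_two (c : F) :
    σP F c (X 2) = X 2 + C (2 * c) * X 1 + C (c ^ 2) * X 0 := by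
  simp [σP]

theorem σP_C (c x : F) : σP F c (C x) = C x := (σP F c).commutes x

theorem τA_X_zero : τA F (X 0) = X 2 := by simp [τA]

theorem τA_X_one : τA F (X 1) = -X 1 := by simp [τA]

theorem C_two : (C 2 : MvPolynomial (Fin 3) F) = 2 := map_ofNat C 2

theorem τA_X_two : τA F (X 2) = X 0 := by simp [τA]

theorem τA_C (x : F) : τA F (C x) = C x := (τA F).commutes x

/-- The polynomial `f` is mapped to a scalar multiple of itself by `τ`. -/
def IsSemiInvariant (f : MvPolynomial (Fin 3) F) : Prop :=
  ∃ ε : F, τA F f = C ε * f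

theorem IsSemiInvariant.mul {f g : MvPolynomial (Fin 3) F} (hf : IsSemiInvariant f)
    (hg : IsSemiInvariant g) : IsSemiInvariant (f * g) := by
  obtain ⟨ε, hε⟩ := hf
  obtain ⟨δ, hδ⟩ := hg
  exact ⟨ε * δ, by rw [map_mul, hε, hδ, C_mul]; ring⟩

theorem τA_eq_comp : (((σP F 1).comp (τA F)).comp (σP F 1)).comp ((τA F).comp (σP F 1)) = τA F := by
  apply MvPolynomial.algHom_ext
  intro i
  fin_cases i <;> simp [σP, τA, map_ofNat] <;> ring

/-- Since `τ = σ₁ τ σ₁ τ σ₁`, a `σ₁`-invariant which is semi-invariant under `τ` is invariant. -/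
theorem IsSemiInvariant.τA_eq {f : MvPolynomial (Fin 3) F} (hf : IsSemiInvariant f)
    (hσ : σP F 1 f = f) : τA F f = f := by
  obtain ⟨ε, hε⟩ := hf
  have h := DFunLike.congr_fun (τA_eq_comp (F := F)) f
  simp only [AlgHom.comp_apply, hσ, hε, map_mul, σP_C, τA_C] at h
  by_cases h0 : τA F f = 0
  · have : f = 0 := (τE F).injective (h0.trans (map_zero _).symm)
    simp [this]
  · rw [hε] at h0
    have hε0 : (C ε : MvPolynomial (Fin 3) F) ≠ 0 := left_ne_zero_of_mul h0
    have := mul_left_cancel₀ hε0 h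
    rw [hε, this]

/-- The linear form `a₂ + 2 c a₁ + (c² - k) a₀`. -/
noncomputable def gammaForm (F : Type*) {Fq : Type*} [Field F] [Field Fq] [Algebra Fq F]
    (k c : Fq) : MvPolynomial (Fin 3) F :=
  X 2 + C (2 * algebraMap Fq F c) * X 1 + C ((algebraMap Fq F c) ^ 2 - algebraMap Fq F k) * X 0

theorem τA_gammaForm {Fq : Type*} [Field Fq] [Algebra Fq F] {k c : Fq} (h : c ^ 2 - k ≠ 0) :
    τA F (gammaForm F k c) = C (algebraMap Fq F (c ^ 2 - k)) *
      gammaForm F (k / (c ^ 2 - k) ^ 2) (-c / (c ^ 2 - k)) := by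
  have h1 : algebraMap Fq F (c ^ 2 - k) * (2 * algebraMap Fq F (-c / (c ^ 2 - k))) =
      -(2 * algebraMap Fq F c) := by
    rw [map_div₀, map_neg]
    have := (map_ne_zero (algebraMap Fq F)).2 h
    field_simp
  have h2 : algebraMap Fq F (c ^ 2 - k) * (algebraMap Fq F (-c / (c ^ 2 - k)) ^ 2 -
      algebraMap Fq F (k / (c ^ 2 - k) ^ 2)) = 1 := by
    rw [← map_pow, ← map_sub, ← map_mul, ← map_one (algebraMap Fq F)]
    congr 1
    field_simp
  have h1' := congrArg (C (σ := Fin 3)) h1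
  have h2' := congrArg (C (σ := Fin 3)) h2
  generalize k / (c ^ 2 - k) ^ 2 = k' at *
  generalize -c / (c ^ 2 - k) = c' at *
  simp only [map_mul, map_sub, map_pow, map_neg, map_one, C_two] at h1' h2'
  simp only [gammaForm, map_add, map_mul, map_sub, map_pow, τA_X_zero, τA_X_one, τA_X_two, τA_C,
    map_ofNat]
  linear_combination -X 1 * h1' - X 0 * h2'

variable {Fq : Type*} [Field Fq] [Fintype Fq] [Algebra Fq F]

theorem σP_prod_gammaForm (d k : Fq) :
    σP F (algebraMap Fq F d) (∏ c : Fq, gammaForm F k c) = ∏ c : Fq, gammaForm F k c := by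
  rw [map_prod]
  refine Fintype.prod_equiv (Equiv.addRight d) _ _ fun c => ?_
  simp only [gammaForm, map_add, map_mul, map_sub, map_pow, σP_X_zero, σP_X_one, σP_X_two, σP_C,
    Equiv.coe_addRight, map_ofNat]
  ring

theorem σP_beta (d : Fq) :
    σP F (algebraMap Fq F d) (∏ c : Fq, (X 1 + C (algebraMap Fq F c) * X 0)) =
      ∏ c : Fq, (X 1 + C (algebraMap Fq F c) * X 0) := by
  rw [map_prod]
  refine Fintype.prod_equiv (Equiv.addRight d) _ _ fun c => ?_
  simp only [map_add, map_mul, σP_X_zero, σP_X_one, σP_C, Equiv.coe_addRight]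
  ring

theorem isSemiInvariant_prod_gammaForm (S : Finset Fq)
    (hS : ∀ k ∈ S, ∀ e : Fq, e ≠ 0 → k / e ^ 2 ∈ S) :
    IsSemiInvariant (∏ x ∈ Finset.univ.filter (fun x : Fq × Fq => x.1 ∈ S ∧ x.2 ^ 2 ≠ x.1),
      gammaForm F x.1 x.2) := by
  refine ⟨∏ x ∈ Finset.univ.filter (fun x : Fq × Fq => x.1 ∈ S ∧ x.2 ^ 2 ≠ x.1),
    algebraMap Fq F (x.2 ^ 2 - x.1), ?_⟩
  have hφ : ∀ k c : Fq, c ^ 2 - k ≠ 0 →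
      (-c / (c ^ 2 - k)) ^ 2 - k / (c ^ 2 - k) ^ 2 = 1 / (c ^ 2 - k) := by
    intro k c h
    field_simp
  have hk : ∀ k c : Fq, c ^ 2 - k ≠ 0 →
      k / (c ^ 2 - k) ^ 2 / (1 / (c ^ 2 - k)) ^ 2 = k := by
    intro k c h
    field_simp
  have hc : ∀ k c : Fq, c ^ 2 - k ≠ 0 → -(-c / (c ^ 2 - k)) / (1 / (c ^ 2 - k)) = c := by
    intro k c h
    field_simp
  have key : ∏ x ∈ Finset.univ.filter (fun x : Fq × Fq => x.1 ∈ S ∧ x.2 ^ 2 ≠ x.1),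
      gammaForm F (x.1 / (x.2 ^ 2 - x.1) ^ 2) (-x.2 / (x.2 ^ 2 - x.1)) =
      ∏ x ∈ Finset.univ.filter (fun x : Fq × Fq => x.1 ∈ S ∧ x.2 ^ 2 ≠ x.1),
        gammaForm F x.1 x.2 := by
    have hmem : ∀ x ∈ Finset.univ.filter (fun x : Fq × Fq => x.1 ∈ S ∧ x.2 ^ 2 ≠ x.1),
        (x.1 / (x.2 ^ 2 - x.1) ^ 2, -x.2 / (x.2 ^ 2 - x.1)) ∈
          Finset.univ.filter (fun x : Fq × Fq => x.1 ∈ S ∧ x.2 ^ 2 ≠ x.1) := by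
      intro x hx
      simp only [Finset.mem_filter, Finset.mem_univ, true_and] at hx ⊢
      have h := sub_ne_zero.2 hx.2
      refine ⟨hS _ hx.1 _ h, sub_ne_zero.1 ?_⟩
      rw [hφ _ _ h]
      exact one_div_ne_zero h
    have hinv : ∀ x ∈ Finset.univ.filter (fun x : Fq × Fq => x.1 ∈ S ∧ x.2 ^ 2 ≠ x.1),
        (x.1 / (x.2 ^ 2 - x.1) ^ 2 /
            ((-x.2 / (x.2 ^ 2 - x.1)) ^ 2 - x.1 / (x.2 ^ 2 - x.1) ^ 2) ^ 2,
          -(-x.2 / (x.2 ^ 2 - x.1)) /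
            ((-x.2 / (x.2 ^ 2 - x.1)) ^ 2 - x.1 / (x.2 ^ 2 - x.1) ^ 2)) = x := by
      intro x hx
      have h := sub_ne_zero.2 (Finset.mem_filter.1 hx).2.2
      rw [hφ _ _ h, hk _ _ h, hc _ _ h]
    exact Finset.prod_nbij' (fun x => (x.1 / (x.2 ^ 2 - x.1) ^ 2, -x.2 / (x.2 ^ 2 - x.1)))
      (fun x => (x.1 / (x.2 ^ 2 - x.1) ^ 2, -x.2 / (x.2 ^ 2 - x.1))) hmem hmem hinv hinv
      fun _ _ => rfl
  rw [map_prod, map_prod]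
  conv_rhs => rw [← key, ← Finset.prod_mul_distrib]
  refine Finset.prod_congr rfl fun x hx => τA_gammaForm ?_
  exact sub_ne_zero.2 (Finset.mem_filter.1 hx).2.2

theorem prod_gammaForm_split (S : Finset Fq) :
    ∏ k ∈ S, ∏ c : Fq, gammaForm F k c =
      (∏ x ∈ Finset.univ.filter (fun x : Fq × Fq => x.1 ∈ S ∧ x.2 ^ 2 ≠ x.1),
        gammaForm F x.1 x.2) *
      ∏ c ∈ Finset.univ.filter (fun c : Fq => c ^ 2 ∈ S),
        (X 2 + C (2 * algebraMap Fq F c) * X 1) := by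
  rw [← Finset.prod_product', ← Finset.prod_filter_not_mul_prod_filter _ (fun x => x.2 ^ 2 = x.1)]
  congr 1
  · refine Finset.prod_congr ?_ fun _ _ => rfl
    ext x
    simp
  · refine Finset.prod_nbij' Prod.snd (fun c => (c ^ 2, c)) ?_ ?_ ?_ ?_ ?_
    · rintro ⟨k, c⟩ hx
      simp only [Finset.mem_filter, Finset.mem_product] at hx ⊢
      simp [hx.2, hx.1.1]
    · intro c hc
      simpa using hc
    · rintro ⟨k, c⟩ hx
      simp only [Finset.mem_filter] at hx
      simp [hx.2]
    · intro c _
      rfl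
    · rintro ⟨k, c⟩ hx
      simp only [Finset.mem_filter] at hx
      simp [gammaForm, ← hx.2]

theorem isSemiInvariant_Γ :
    IsSemiInvariant (∏ k ∈ Finset.univ.filter (fun k : Fq => k ≠ 0 ∧ ¬ IsSquare k),
      ∏ c : Fq, gammaForm F k c) := by
  have h0 : Finset.univ.filter (fun c : Fq => c ^ 2 ∈ Finset.univ.filter
      (fun k : Fq => k ≠ 0 ∧ ¬ IsSquare k)) = ∅ := by
    ext c
    simp [IsSquare.sq c]
  rw [prod_gammaForm_split, h0, Finset.prod_empty, mul_one]
  · refine isSemiInvariant_prod_gammaForm _ fun k hk e he => ?_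
    simp only [Finset.mem_filter, Finset.mem_univ, true_and] at hk ⊢
    refine ⟨div_ne_zero hk.1 (pow_ne_zero 2 he), fun h => hk.2 ?_⟩
    have := h.mul (IsSquare.sq e)
    rwa [div_mul_cancel₀ _ (pow_ne_zero 2 he)] at this

theorem isSemiInvariant_J :
    IsSemiInvariant (X 0 * ∏ c : Fq, gammaForm F 0 c) := by
  have h := prod_gammaForm_split (F := F) ({0} : Finset Fq)
  rw [Finset.prod_singleton] at h
  have h0 : Finset.univ.filter (fun c : Fq => c ^ 2 ∈ ({0} : Finset Fq)) = {0} := by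
    ext c
    simp
  rw [h, h0, mul_left_comm]
  refine (isSemiInvariant_prod_gammaForm _ fun k hk e he => ?_).mul ⟨1, ?_⟩
  · simp_all
  · simp [τA_X_zero, τA_X_two, mul_comm]

theorem isSemiInvariant_B (h2 : (2 : Fq) ≠ 0) :
    IsSemiInvariant ((∏ c : Fq, (X 1 + C (algebraMap Fq F c) * X 0)) *
      ∏ k ∈ Finset.univ.filter (fun k : Fq => k ≠ 0 ∧ IsSquare k),
        ∏ c : Fq, gammaForm F k c) := by
  have h0 : Finset.univ.filter (fun c : Fq => c ^ 2 ∈ Finset.univ.filter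
      (fun k : Fq => k ≠ 0 ∧ IsSquare k)) = Finset.univ.erase 0 := by
    ext c
    simp [IsSquare.sq c]
  rw [prod_gammaForm_split, h0, ← Finset.mul_prod_erase Finset.univ _ (Finset.mem_univ 0)]
  have hpair : IsSemiInvariant ((∏ c ∈ Finset.univ.erase (0 : Fq),
      (X 1 + C (algebraMap Fq F c) * X 0)) *
      ∏ c ∈ Finset.univ.erase (0 : Fq), (X 2 + C (2 * algebraMap Fq F c) * X 1)) := by
    rw [← Finset.prod_mul_distrib]
    refine ⟨∏ c ∈ Finset.univ.erase (0 : Fq), algebraMap Fq F (-2 * c ^ 2), ?_⟩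
    have hmem : ∀ c ∈ Finset.univ.erase (0 : Fq), -1 / (2 * c) ∈ Finset.univ.erase (0 : Fq) := by
      intro c hc
      simpa [h2] using hc
    have hinv : ∀ c ∈ Finset.univ.erase (0 : Fq), -1 / (2 * (-1 / (2 * c))) = c := by
      intro c hc
      have := Finset.ne_of_mem_erase hc
      field_simp
    have key : ∏ c ∈ Finset.univ.erase (0 : Fq),
        ((X 1 : MvPolynomial (Fin 3) F) + C (algebraMap Fq F (-1 / (2 * c))) * X 0) *
          (X 2 + C (2 * algebraMap Fq F (-1 / (2 * c))) * X 1) =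
        ∏ c ∈ Finset.univ.erase (0 : Fq), (X 1 + C (algebraMap Fq F c) * X 0) *
          (X 2 + C (2 * algebraMap Fq F c) * X 1) :=
      Finset.prod_nbij' (fun c => -1 / (2 * c)) (fun c => -1 / (2 * c)) hmem hmem hinv hinv
        fun _ _ => rfl
    rw [map_prod, map_prod]
    conv_rhs => rw [← key, ← Finset.prod_mul_distrib]
    refine Finset.prod_congr rfl fun c hc => ?_
    have hc0 : algebraMap Fq F c ≠ 0 := (map_ne_zero _).2 (Finset.ne_of_mem_erase hc)
    have h2' : (2 : F) ≠ 0 := by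
      rw [← map_ofNat (algebraMap Fq F)]
      exact (map_ne_zero _).2 h2
    have e1 : (C (algebraMap Fq F c) : MvPolynomial (Fin 3) F) *
        C (algebraMap Fq F (-1 / (2 * c))) * 2 = -1 := by
      rw [← map_ofNat C 2, ← C_mul, ← C_mul, ← C_1, ← C_neg]
      congr 1
      rw [map_div₀, map_mul, map_neg, map_one, map_ofNat]
      field_simp
    simp only [map_mul, map_add, τA_X_zero, τA_X_one, τA_X_two, τA_C, map_neg, map_pow,
      map_ofNat]
    generalize C (algebraMap Fq F (-1 / (2 * c))) = y at *
    generalize C (algebraMap Fq F c) = x at *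
    linear_combination ((2 * x * y - 1) * X 0 * X 1 + 2 * x * X 1 ^ 2 + x * X 0 * X 2) * e1
  have hX : IsSemiInvariant (X 1 + C (algebraMap Fq F 0) * X 0) :=
    ⟨-1, by simp [τA_X_one]⟩
  have hrest := isSemiInvariant_prod_gammaForm (F := F)
    (Finset.univ.filter (fun k : Fq => k ≠ 0 ∧ IsSquare k)) fun k hk e he => by
      simp only [Finset.mem_filter, Finset.mem_univ, true_and] at hk ⊢
      exact ⟨div_ne_zero hk.1 (pow_ne_zero 2 he), hk.2.div (IsSquare.sq e)⟩
  convert! (hX.mul hrest).mul hpair using 1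
  ring

end Invariance

section LowerBound

variable {F K Fq : Type*} [Field F] [Field K] [Algebra F K] [Field Fq] [Fintype Fq]
  [Algebra Fq F] [Algebra Fq K] [IsScalarTower Fq F K]

/-- If a finite extension `K / E` admits automorphisms acting on linearly independent elements
`a₀, a₁, a₂` as the generators of `SL₂(𝔽_q)` act on binary quadratic forms, then its degree is at
least the order of `PSL₂(𝔽_q)`. -/
theorem le_finrank_of_automorphisms {d : ℕ} (hq : Fintype.card Fq = 2 * d + 1) {a₀ a₁ a₂ : K}
    (hli : ∀ x y z : Fq, algebraMap Fq K x * a₀ + algebraMap Fq K y * a₁ +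
      algebraMap Fq K z * a₂ = 0 → x = 0 ∧ y = 0 ∧ z = 0)
    (E : IntermediateField F K) [FiniteDimensional E K] (σ : Fq → K ≃ₐ[F] K) (τ : K ≃ₐ[F] K)
    (hσE : ∀ c, σ c ∈ E.fixingSubgroup) (hτE : τ ∈ E.fixingSubgroup)
    (hσ₀ : ∀ c, σ c a₀ = a₀) (hσ₁ : ∀ c, σ c a₁ = a₁ + algebraMap Fq K c * a₀)
    (hσ₂ : ∀ c, σ c a₂ = a₂ + 2 * algebraMap Fq K c * a₁ + algebraMap Fq K c ^ 2 * a₀)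
    (hτ₀ : τ a₀ = a₂) (hτ₁ : τ a₁ = -a₁) (hτ₂ : τ a₂ = a₀) :
    d * (2 * d + 2) * (2 * d + 1) ≤ Module.finrank E K := by
  have h2 : (2 : Fq) ≠ 0 := Ring.two_ne_zero fun h => by
    have := FiniteField.even_card_of_char_two h
    omega
  have hfix : ∀ (g : K ≃ₐ[F] K) (c : Fq), g (algebraMap Fq K c) = algebraMap Fq K c := by
    intro g c
    rw [IsScalarTower.algebraMap_apply Fq F K, g.commutes]
  let Q := {k : Fq // k ≠ 0 ∧ IsSquare k}
  have horbit : ∀ x : Q × Option Fq, ∃ g ∈ E.fixingSubgroup, g a₀ = algebraMap Fq K x.1.1 *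
      x.2.elim a₀ fun e => a₂ + 2 * algebraMap Fq K e * a₁ + algebraMap Fq K e ^ 2 * a₀ := by
    rintro ⟨⟨k, hk0, c, rfl⟩, o⟩
    have hc : c ≠ 0 := left_ne_zero_of_mul hk0
    have hc' : algebraMap Fq K c ≠ 0 := (map_ne_zero _).2 hc
    have hu : σ (1 / c) (τ (σ c (τ a₀))) = algebraMap Fq K (c * c) * a₂ := by
      simp only [hτ₀, hσ₂, map_add, map_mul, map_pow, map_ofNat, hfix, hτ₁, hτ₂, map_neg, hσ₀,
        hσ₁, map_div₀, map_one]
      field_simp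
      ring
    have hmem : σ (1 / c) * (τ * (σ c * τ)) ∈ E.fixingSubgroup :=
      mul_mem (hσE _) (mul_mem hτE (mul_mem (hσE _) hτE))
    cases o with
    | none =>
      refine ⟨τ * (σ (1 / c) * (τ * (σ c * τ))), mul_mem hτE hmem, ?_⟩
      simp only [AlgEquiv.mul_apply, hu, map_mul, hfix, hτ₂, Option.elim]
    | some e =>
      refine ⟨σ e * (σ (1 / c) * (τ * (σ c * τ))), mul_mem (hσE e) hmem, ?_⟩
      simp only [AlgEquiv.mul_apply, hu, map_mul, hfix, hσ₂, Option.elim]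
  have hinj : ∀ x y : Q × Option Fq,
      algebraMap Fq K x.1.1 * (x.2.elim a₀ fun e =>
        a₂ + 2 * algebraMap Fq K e * a₁ + algebraMap Fq K e ^ 2 * a₀) =
      algebraMap Fq K y.1.1 * (y.2.elim a₀ fun e =>
        a₂ + 2 * algebraMap Fq K e * a₁ + algebraMap Fq K e ^ 2 * a₀) → x = y := by
    rintro ⟨⟨k, hk⟩, o⟩ ⟨⟨l, hl⟩, o'⟩ h
    cases o with
    | none =>
      cases o' with
      | none =>
        obtain ⟨h0, -, -⟩ := hli (k - l) 0 0 (by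
          simp only [map_sub, map_zero, Option.elim] at h ⊢
          linear_combination h)
        obtain rfl := sub_eq_zero.1 h0
        rfl
      | some e =>
        obtain ⟨-, -, h0⟩ := hli (k - l * e ^ 2) (-2 * l * e) (-l) (by
          simp only [map_sub, map_mul, map_neg, map_pow, map_ofNat, Option.elim] at h ⊢
          linear_combination h)
        exact absurd (neg_eq_zero.1 h0) hl.1
    | some e =>
      cases o' with
      | none =>
        obtain ⟨-, -, h0⟩ := hli (k * e ^ 2 - l) (2 * k * e) k (by
          simp only [map_sub, map_mul, map_pow, map_ofNat, Option.elim] at h ⊢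
          linear_combination h)
        exact absurd h0 hk.1
      | some e' =>
        obtain ⟨-, h1, h0⟩ := hli (k * e ^ 2 - l * e' ^ 2) (2 * (k * e - l * e')) (k - l) (by
          simp only [map_sub, map_mul, map_pow, map_ofNat, Option.elim] at h ⊢
          linear_combination h)
        obtain rfl := sub_eq_zero.1 h0
        rw [← mul_sub] at h1
        have := sub_eq_zero.1 (((mul_eq_zero.1 h1).resolve_left h2 |> mul_eq_zero.1).resolve_left
          hk.1)
        rw [this]
  choose w hwE hw using horbit
  let f : (Q × Option Fq) × Fq → E.fixingSubgroup :=
    fun x => ⟨w x.1 * σ x.2, mul_mem (hwE _) (hσE _)⟩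
  have hf : Function.Injective f := by
    rintro ⟨x, c⟩ ⟨y, e⟩ h
    have hfun : w x * σ c = w y * σ e := congrArg Subtype.val h
    have h0 := DFunLike.congr_fun hfun a₀
    simp only [AlgEquiv.mul_apply, hσ₀, hw] at h0
    obtain rfl := hinj x y h0
    have h1 := DFunLike.congr_fun (mul_left_cancel hfun) a₁
    rw [hσ₁, hσ₁] at h1
    obtain ⟨h1, -, -⟩ := hli (c - e) 0 0 (by
      simp only [map_sub, map_zero]
      linear_combination h1)
    rw [sub_eq_zero.1 h1]
  have hcardQ : Fintype.card Q = d := by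
    rw [Fintype.card_subtype]
    exact (card_squares_and_nonsquares hq).1
  calc d * (2 * d + 2) * (2 * d + 1) = Nat.card ((Q × Option Fq) × Fq) := by
        rw [Nat.card_eq_fintype_card, Fintype.card_prod, Fintype.card_prod, Fintype.card_option,
          hq, hcardQ]
    _ ≤ Nat.card (K ≃ₐ[E] K) :=
        Nat.card_le_card_of_injective (IntermediateField.fixingSubgroupEquiv E ∘ f)
          ((IntermediateField.fixingSubgroupEquiv E).injective.comp hf)
    _ ≤ Module.finrank E K := by
        rw [Nat.card_eq_fintype_card]
        exact AlgEquiv.card_le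

end LowerBound

section FractionField

variable {F : Type*} [Field F]

local notation "𝒦" => FractionRing (MvPolynomial (Fin 3) F)

theorem algebraMap_C (x : F) :
    algebraMap (MvPolynomial (Fin 3) F) 𝒦 (C x) = algebraMap F 𝒦 x :=
  (IsScalarTower.algebraMap_apply F (MvPolynomial (Fin 3) F) 𝒦 x).symm

theorem σK_algebraMap (c : F) (f : MvPolynomial (Fin 3) F) :
    σK F c (algebraMap _ _ f) = algebraMap _ 𝒦 (σP F c f) :=
  IsFractionRing.ringEquivOfRingEquiv_algebraMap _ f

theorem τK_algebraMap (f : MvPolynomial (Fin 3) F) :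
    τK F (algebraMap _ _ f) = algebraMap _ 𝒦 (τA F f) :=
  IsFractionRing.ringEquivOfRingEquiv_algebraMap _ f

/-- `σ_c` as an `F`-automorphism of the field of fractions. -/
noncomputable def σAut (c : F) : 𝒦 ≃ₐ[F] 𝒦 :=
  AlgEquiv.ofRingEquiv (f := σK F c) fun x => by
    rw [← algebraMap_C, σK_algebraMap, σP_C]

/-- `τ` as an `F`-automorphism of the field of fractions. -/
noncomputable def τAut : 𝒦 ≃ₐ[F] 𝒦 :=
  AlgEquiv.ofRingEquiv (f := τK F) fun x => by
    rw [← algebraMap_C, τK_algebraMap, τA_C]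

theorem adjoin_X_eq_top :
    IntermediateField.adjoin F ({algebraMap (MvPolynomial (Fin 3) F) 𝒦 (X 0),
      algebraMap (MvPolynomial (Fin 3) F) 𝒦 (X 1),
      algebraMap (MvPolynomial (Fin 3) F) 𝒦 (X 2)} : Set 𝒦) = ⊤ := by
  set L := IntermediateField.adjoin F ({algebraMap (MvPolynomial (Fin 3) F) 𝒦 (X 0),
      algebraMap (MvPolynomial (Fin 3) F) 𝒦 (X 1),
      algebraMap (MvPolynomial (Fin 3) F) 𝒦 (X 2)} : Set 𝒦) with hL
  have hX : ∀ i, algebraMap (MvPolynomial (Fin 3) F) 𝒦 (X i) ∈ L := fun i =>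
    IntermediateField.subset_adjoin F _ (by fin_cases i <;> simp)
  have hpoly : ∀ f : MvPolynomial (Fin 3) F, algebraMap _ 𝒦 f ∈ L := by
    intro f
    induction f using MvPolynomial.induction_on with
    | C a =>
      rw [algebraMap_C]
      exact L.algebraMap_mem a
    | add f g hf hg =>
      rw [map_add]
      exact add_mem hf hg
    | mul_X f i hf =>
      rw [map_mul]
      exact mul_mem hf (hX i)
  refine eq_top_iff.2 fun x _ => ?_
  obtain ⟨f, g, -, rfl⟩ := IsFractionRing.div_surjective (A := MvPolynomial (Fin 3) F) x
  exact div_mem (hpoly f) (hpoly g)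

theorem linear_form_eq_zero {x y z : F}
    (h : C x * X 0 + C y * X 1 + C z * X 2 = (0 : MvPolynomial (Fin 3) F)) :
    x = 0 ∧ y = 0 ∧ z = 0 := by
  refine ⟨?_, ?_, ?_⟩
  · simpa using congrArg (eval ![1, 0, 0]) h
  · simpa using congrArg (eval ![0, 1, 0]) h
  · simpa using congrArg (eval ![0, 0, 1]) h

theorem discriminant_ne_zero : (X 1 ^ 2 - X 0 * X 2 : MvPolynomial (Fin 3) F) ≠ 0 := fun h => by
  simpa using congrArg (eval ![0, 1, 0]) h

theorem σP_discriminant (c : F) :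
    σP F c (X 1 ^ 2 - X 0 * X 2) = X 1 ^ 2 - X 0 * X 2 := by
  simp only [map_sub, map_pow, map_mul, σP_X_zero, σP_X_one, σP_X_two, C_two]
  ring

theorem τA_discriminant : τA F (X 1 ^ 2 - X 0 * X 2) = X 1 ^ 2 - X 0 * X 2 := by
  simp only [map_sub, map_pow, map_mul, τA_X_zero, τA_X_one, τA_X_two]
  ring

/-- Three elements over which the rational function field in three variables is algebraic are
algebraically independent. -/
theorem algebraicIndependent_of_isAlgebraic (x : Fin 3 → 𝒦)
    [h : Algebra.IsAlgebraic (IntermediateField.adjoin F (Set.range x)) 𝒦] :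
    AlgebraicIndependent F x := by
  have := IntermediateField.isAlgebraic_adjoin_iff_top.1 h
  refine (Algebra.IsAlgebraic.isTranscendenceBasis_of_lift_le_trdeg_of_finite F x ?_).1
  have h1 := trdeg_le_of_injective (IsScalarTower.toAlgHom F (MvPolynomial (Fin 3) F) 𝒦)
    (IsFractionRing.injective (MvPolynomial (Fin 3) F) 𝒦)
  rw [MvPolynomial.trdeg_of_isDomain] at h1
  simpa using h1

end FractionField


/-- With `m = ⌊(q + 1 + q(q−1)/2)/2⌋` and `s = ⌊(1 + q(q−1)/2)/2⌋`, the fixed field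
`F(a0,a1,a2)^{SL₂(F_q)}` equals `F(B/Δ^m, J/Δ^{(q+1)/2}, Γ/Δ^s)`, and these three generators
are algebraically independent over `F`; in particular the fixed field is a purely
transcendental extension of `F` of transcendence degree 3. -/
theorem SL2_fixed_field_purely_transcendental (F : Type*) [Field F] (p n q : ℕ)
    (hp : p.Prime) (hp2 : p ≠ 2) [CharP F p] (hn : n ≠ 0) (hq : q = p ^ n)
    (Fq : Type*) [Field Fq] [Fintype Fq] [Algebra Fq F] (hcard : Fintype.card Fq = q)
    (m s : ℕ) (hm : m = (q + 1 + q * (q - 1) / 2) / 2) (hs : s = (1 + q * (q - 1) / 2) / 2)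
    (Δ β γ₀ Γ B J : MvPolynomial (Fin 3) F)
    (hΔ : Δ = X 1 ^ 2 - X 0 * X 2)
    (hβ : β = ∏ c : Fq, (X 1 + C (algebraMap Fq F c) * X 0))
    (hγ : γ₀ = ∏ c : Fq,
      (X 2 + C (2 * algebraMap Fq F c) * X 1 + C ((algebraMap Fq F c) ^ 2) * X 0))
    (hΓ : Γ = ∏ k ∈ Finset.univ.filter (fun k : Fq => k ≠ 0 ∧ ¬ IsSquare k),
      ∏ c : Fq, (X 2 + C (2 * algebraMap Fq F c) * X 1 +
        C ((algebraMap Fq F c) ^ 2 - algebraMap Fq F k) * X 0))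
    (hB : B = β * ∏ k ∈ Finset.univ.filter (fun k : Fq => k ≠ 0 ∧ IsSquare k),
      ∏ c : Fq, (X 2 + C (2 * algebraMap Fq F c) * X 1 +
        C ((algebraMap Fq F c) ^ 2 - algebraMap Fq F k) * X 0))
    (hJ : J = X 0 * γ₀) :
    let K := FractionRing (MvPolynomial (Fin 3) F)
    let ι := algebraMap (MvPolynomial (Fin 3) F) K
    let g₁ : K := ι B / ι Δ ^ m
    let g₂ : K := ι J / ι Δ ^ ((q + 1) / 2)
    let g₃ : K := ι Γ / ι Δ ^ s
    {x : K | (∀ c : Fq, σK F (algebraMap Fq F c) x = x) ∧ τK F x = x} =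
      (Subfield.closure
        (Set.range (ι.comp (C : F →+* MvPolynomial (Fin 3) F)) ∪ {g₁, g₂, g₃}) : Set K) ∧
    AlgebraicIndependent F ![g₁, g₂, g₃] := by
  intro K ι g₁ g₂ g₃
  have hodd : Odd q := hq ▸ (hp.odd_of_ne_two hp2).pow
  obtain ⟨d, hd⟩ := hodd
  have hqd : Fintype.card Fq = 2 * d + 1 := hcard.trans hd
  have hhalf : q * (q - 1) / 2 = (2 * d + 1) * d := by
    rw [hd, Nat.add_sub_cancel, mul_left_comm, Nat.mul_div_cancel_left _ two_pos]
  have hhalf' : (q + 1) / 2 = d + 1 := by omega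
  have h2 : (2 : Fq) ≠ 0 := Ring.two_ne_zero fun h => by
    have := FiniteField.even_card_of_char_two h
    omega
  have hC : ∀ c : Fq, ι (C (algebraMap Fq F c)) = algebraMap Fq K c := fun c => by
    rw [IsScalarTower.algebraMap_apply Fq F K]
    exact algebraMap_C _
  have hιinj : Function.Injective ι := IsFractionRing.injective (MvPolynomial (Fin 3) F) K
  have hΔ0 : ι Δ ≠ 0 := by
    rw [hΔ]
    exact (map_ne_zero_iff ι hιinj).2 discriminant_ne_zero
  have hβι : ι β = ∏ c : Fq, (ι (X 1) + algebraMap Fq K c * ι (X 0)) := by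
    simp only [hβ, map_prod, map_add, map_mul, hC]
  have hγι : ∀ k : Fq, ι (∏ c : Fq, gammaForm F k c) =
      gammaAt Fq (ι (X 0)) (ι (X 1)) (ι (X 2)) k := fun k => by
    simp only [gammaForm, gammaAt, map_prod, map_add, map_mul, map_sub, map_pow, hC, map_ofNat]
  have hγ₀ : γ₀ = ∏ c : Fq, gammaForm F 0 c := by
    simp only [hγ, gammaForm, map_zero, sub_zero]
  have hli : ∀ x y z : Fq, algebraMap Fq K x * ι (X 0) + algebraMap Fq K y * ι (X 1) +
      algebraMap Fq K z * ι (X 2) = 0 → x = 0 ∧ y = 0 ∧ z = 0 := by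
    intro x y z h
    simp only [← hC, ← map_mul, ← map_add] at h
    simpa using linear_form_eq_zero ((map_eq_zero_iff ι hιinj).1 h)
  have hσB : ∀ c : Fq, σP F (algebraMap Fq F c) B = B := fun c => by
    rw [hB, map_mul, hβ, σP_beta, map_prod]
    exact congrArg _ (Finset.prod_congr rfl fun k _ => σP_prod_gammaForm c k)
  have hσJ : ∀ c : Fq, σP F (algebraMap Fq F c) J = J := fun c => by
    rw [hJ, map_mul, hγ₀, σP_prod_gammaForm, σP_X_zero]
  have hσΓ : ∀ c : Fq, σP F (algebraMap Fq F c) Γ = Γ := fun c => by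
    rw [hΓ, map_prod]
    exact Finset.prod_congr rfl fun k _ => σP_prod_gammaForm c k
  have hτB : τA F B = B := IsSemiInvariant.τA_eq
    (by rw [hB, hβ]; exact isSemiInvariant_B h2) (by simpa using hσB 1)
  have hτJ : τA F J = J := IsSemiInvariant.τA_eq
    (by rw [hJ, hγ₀]; exact isSemiInvariant_J) (by simpa using hσJ 1)
  have hτΓ : τA F Γ = Γ := IsSemiInvariant.τA_eq
    (by rw [hΓ]; exact isSemiInvariant_Γ) (by simpa using hσΓ 1)
  let H : Subgroup (K ≃ₐ[F] K) :=
    Subgroup.closure (Set.range (fun c : Fq => σAut (algebraMap Fq F c)) ∪ {τAut})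
  let E := IntermediateField.fixedField H
  have hmemE : ∀ x : K, x ∈ E ↔ (∀ c : Fq, σK F (algebraMap Fq F c) x = x) ∧ τK F x = x := by
    intro x
    rw [IntermediateField.mem_fixedField_iff]
    constructor
    · intro h
      exact ⟨fun c => h _ (Subgroup.subset_closure (Or.inl ⟨c, rfl⟩)),
        h _ (Subgroup.subset_closure (Or.inr rfl))⟩
    · rintro ⟨hσ, hτ⟩
      have hle : H ≤ MulAction.stabilizer (K ≃ₐ[F] K) x := by
        rw [Subgroup.closure_le]
        rintro _ (⟨c, rfl⟩ | rfl)
        · exact hσ c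
        · exact hτ
      exact fun f hf => hle hf
  have hdivE : ∀ (f : MvPolynomial (Fin 3) F) (r : ℕ),
      (∀ c : Fq, σP F (algebraMap Fq F c) f = f) → τA F f = f → ι f / ι Δ ^ r ∈ E := by
    intro f r hσ hτ
    refine (hmemE _).2 ⟨fun c => ?_, ?_⟩
    · rw [map_div₀, map_pow, σK_algebraMap, σK_algebraMap, hσ, hΔ, σP_discriminant]
    · rw [map_div₀, map_pow, τK_algebraMap, τK_algebraMap, hτ, hΔ, τA_discriminant]
  let L := IntermediateField.adjoin F ({g₁, g₂, g₃} : Set K)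
  have hLE : L ≤ E := by
    rw [IntermediateField.adjoin_le_iff]
    rintro x (rfl | rfl | rfl)
    · exact hdivE _ _ hσB hτB
    · exact hdivE _ _ hσJ hτJ
    · exact hdivE _ _ hσΓ hτΓ
  have hΔι : ι Δ = ι (X 1) ^ 2 - ι (X 0) * ι (X 2) := by
    rw [hΔ, map_sub, map_pow, map_mul]
  have h1 : (1 : Fq) ≠ 0 := one_ne_zero
  obtain ⟨hfin, hrank⟩ := finrank_le_of_generators (F := F) (Fq := Fq) hqd
    (a₀ := ι (X 0)) (a₁ := ι (X 1)) (a₂ := ι (X 2))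
    (fun h => h1 (hli 1 0 0 (by simp [h])).1) (hΔι ▸ hΔ0)
    (Finset.prod_ne_zero_iff.2 fun c _ h => h1 (hli c 1 0 (by
      rw [map_one, map_zero]
      linear_combination h)).2.1)
    (fun k => Finset.prod_ne_zero_iff.2 fun c _ h => h1 (hli (c ^ 2 - k) (2 * c) 1 (by
      simp only [map_sub, map_pow, map_mul, map_ofNat, map_one]
      linear_combination h)).2.2)
    adjoin_X_eq_top L (m := m) (s := s) (by rw [hm, hhalf, hd]) (by rw [hs, hhalf])
    (g₁ := g₁) (g₂ := g₂) (g₃ := g₃) (IntermediateField.subset_adjoin F _ (by simp))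
    (IntermediateField.subset_adjoin F _ (by simp)) (IntermediateField.subset_adjoin F _ (by simp))
    (by
      rw [← hΔι, div_mul_cancel₀ _ (pow_ne_zero _ hΔ0), hB, map_mul, hβι, map_prod]
      exact congrArg _ (Finset.prod_congr rfl fun k _ => (hγι k).symm))
    (by
      rw [← hΔι, ← hhalf', div_mul_cancel₀ _ (pow_ne_zero _ hΔ0), hJ, map_mul, hγ₀, hγι])
    (by
      rw [← hΔι, div_mul_cancel₀ _ (pow_ne_zero _ hΔ0), hΓ, map_prod]
      exact Finset.prod_congr rfl fun k _ => (hγι k).symm)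
  have hfinE : FiniteDimensional E K := by
    let _ := (IntermediateField.inclusion hLE).toRingHom.toAlgebra
    have : IsScalarTower L E K := .of_algebraMap_eq fun _ => rfl
    exact FiniteDimensional.right L E K
  have hHE : H ≤ E.fixingSubgroup := IntermediateField.le_iff_le H E |>.1 le_rfl
  have hlow := le_finrank_of_automorphisms hqd hli E
    (fun c : Fq => σAut (algebraMap Fq F c)) τAut
    (fun c => hHE (Subgroup.subset_closure (Or.inl ⟨c, rfl⟩)))
    (hHE (Subgroup.subset_closure (Or.inr rfl)))
    (fun c => (σK_algebraMap _ _).trans (by rw [σP_X_zero]))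
    (fun c => (σK_algebraMap _ _).trans (by rw [σP_X_one, map_add, map_mul, ← hC]))
    (fun c => (σK_algebraMap _ _).trans (by
      simp only [σP_X_two, map_add, map_mul, map_pow, ← hC, map_ofNat]
      rfl))
    ((τK_algebraMap _).trans (by rw [τA_X_zero]))
    ((τK_algebraMap _).trans (by rw [τA_X_one, map_neg]))
    ((τK_algebraMap _).trans (by rw [τA_X_two]))
  have hEq : L = E := IntermediateField.eq_of_le_of_finrank_le' hLE (hrank.trans hlow)
  constructor
  · ext x
    rw [Set.mem_ofPred_eq, ← hmemE, ← hEq]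
    have hrange : ι.comp C = algebraMap F K := RingHom.ext algebraMap_C
    rw [hrange]
    rfl
  · have hrange : Set.range ![g₁, g₂, g₃] = {g₁, g₂, g₃} := by
      ext x
      simp only [Matrix.range_cons, Matrix.range_empty, Set.mem_union, Set.mem_insert_iff,
        Set.mem_singleton_iff, Set.mem_empty_iff_false, or_false]
    have : Algebra.IsAlgebraic (IntermediateField.adjoin F (Set.range ![g₁, g₂, g₃])) K := by
      rw [hrange]
      exact Algebra.IsAlgebraic.of_finite L K
    exact algebraicIndependent_of_isAlgebraic _
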